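/- arXiv:2310.01865 — 2 statements merged into one kernel-verified Lean document; each statement's English description precedes it below -/
import Mathlib

section
/- Let (Ω, ℱ, μ) be a probability space, E a measurable space, and let C : Ω → E, S : Ω → ℝ, W : Ω → ℝ, U : Ω → ℝ be measurable with W(ω) ∈ {0,1} for every ω and U integrable. Let g : ℝ × E → ℝ be measurable such that ω ↦ g(1, C(ω)) and ω ↦ g(0, C(ω)) are integrable, and define the outcome Y(ω) = g(W(ω), C(ω)) + U(ω). Assume the instrument-exclusion condition μ[U | σ(S,C)] = μ[U | σ(C)] almost everywhere. Define the counterfactual prediction functions f₁ := (ω ↦ g(1, C(ω))) + μ[U | σ(C)] and f₀ := (ω ↦ g(0, C(ω))) + μ[U | σ(C)]. Then, almost everywhere, μ[Y | σ(S,C)] = f₁ · μ[W | σ(S,C)] + f₀ · (1 − μ[W | σ(S,C)]). -/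
open MeasureTheory

/-!
Since `W` takes only the values `0` and `1`, `g (W, C)` equals
`W • (g (1, C) - g (0, C)) + g (0, C)`. Given `σ(S, C)`, both `g (w, C)` are known, so
conditioning replaces `W` by its conditional expectation. By exclusion `U` contributes `E[U | C]`,
which the weights `E[W | S, C]` and `1 - E[W | S, C]`, having sum one, distribute over both arms.
-/

lemma smul_add_one_sub_smul_eq_smul_sub_add {R M : Type*} [Ring R] [AddCommGroup M] [Module R M]
    (r : R) (x y : M) : r • x + (1 - r) • y = r • (x - y) + y := by
  rw [smul_sub, sub_smul, one_smul]
  abel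

section

variable {Ω F : Type*} [NormedAddCommGroup F] [NormedSpace ℝ F] {m mΩ : MeasurableSpace Ω}
  {μ : Measure Ω} {W : Ω → ℝ}

lemma ae_norm_le_one_of_binary (hW : ∀ᵐ ω ∂μ, W ω = 0 ∨ W ω = 1) : ∀ᵐ ω ∂μ, ‖W ω‖ ≤ 1 := by
  filter_upwards [hW] with ω hω
  rcases hω with h | h <;> simp [h]

lemma ae_eq_smul_add_one_sub_smul_of_binary {M : Type*} [AddCommMonoid M] [Module ℝ M]
    (hW : ∀ᵐ ω ∂μ, W ω = 0 ∨ W ω = 1) (X : ℝ → Ω → M) :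
    (fun ω => X (W ω) ω) =ᵐ[μ] W • X 1 + (1 - W) • X 0 := by
  filter_upwards [hW] with ω hω
  rcases hω with h | h <;> simp [h]

lemma integrable_smul_of_binary (hWm : AEStronglyMeasurable W μ)
    (hW : ∀ᵐ ω ∂μ, W ω = 0 ∨ W ω = 1) {X : Ω → F} (hX : Integrable X μ) :
    Integrable (W • X) μ :=
  hX.bdd_smul 1 hWm (ae_norm_le_one_of_binary hW)

lemma integrable_apply_of_binary (hWm : AEStronglyMeasurable W μ)
    (hW : ∀ᵐ ω ∂μ, W ω = 0 ∨ W ω = 1) {X : ℝ → Ω → F}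
    (hX₁ : Integrable (X 1) μ) (hX₀ : Integrable (X 0) μ) :
    Integrable (fun ω => X (W ω) ω) μ := by
  refine Integrable.congr ?_ (ae_eq_smul_add_one_sub_smul_of_binary hW X).symm
  rw [smul_add_one_sub_smul_eq_smul_sub_add]
  exact (integrable_smul_of_binary hWm hW (hX₁.sub hX₀)).add hX₀

variable [CompleteSpace F]

lemma condExp_smul_add_one_sub_smul (hm : m ≤ mΩ) [SigmaFinite (μ.trim hm)] {X₁ X₀ : Ω → F}
    (hW : Integrable W μ) (hWX : Integrable (W • (X₁ - X₀)) μ) (hX₀ : Integrable X₀ μ)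
    (hX₁m : AEStronglyMeasurable[m] X₁ μ) (hX₀m : AEStronglyMeasurable[m] X₀ μ) :
    μ[W • X₁ + (1 - W) • X₀ | m] =ᵐ[μ] μ[W | m] • X₁ + (1 - μ[W | m]) • X₀ := by
  simp only [smul_add_one_sub_smul_eq_smul_sub_add]
  calc μ[W • (X₁ - X₀) + X₀ | m]
      =ᵐ[μ] μ[W • (X₁ - X₀) | m] + μ[X₀ | m] := condExp_add hWX hX₀ m
    _ =ᵐ[μ] μ[W | m] • (X₁ - X₀) + X₀ :=
      (condExp_smul_of_aestronglyMeasurable_right hW hWX (hX₁m.sub hX₀m)).add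
        (condExp_of_aestronglyMeasurable' hm hX₀m hX₀)

lemma condExp_apply_of_binary (hm : m ≤ mΩ) [SigmaFinite (μ.trim hm)]
    (hWint : Integrable W μ) (hW : ∀ᵐ ω ∂μ, W ω = 0 ∨ W ω = 1) {X : ℝ → Ω → F}
    (hX₁ : Integrable (X 1) μ) (hX₀ : Integrable (X 0) μ)
    (hX₁m : AEStronglyMeasurable[m] (X 1) μ) (hX₀m : AEStronglyMeasurable[m] (X 0) μ) :
    μ[fun ω => X (W ω) ω | m] =ᵐ[μ] μ[W | m] • X 1 + (1 - μ[W | m]) • X 0 :=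
  (condExp_congr_ae (ae_eq_smul_add_one_sub_smul_of_binary hW X)).trans <|
    condExp_smul_add_one_sub_smul hm hWint
      (integrable_smul_of_binary hWint.aestronglyMeasurable hW (hX₁.sub hX₀)) hX₀ hX₁m hX₀m

/-- `m` takes the place of `σ(S, C)`. -/
theorem civ_counterfactual_prediction_identity_general {E : Type*} [MeasurableSpace E]
    (hm : m ≤ mΩ) [SigmaFinite (μ.trim hm)] {C : Ω → E} {U : Ω → F} (hC : Measurable[m] C)
    (hWint : Integrable W μ) (hW : ∀ᵐ ω ∂μ, W ω = 0 ∨ W ω = 1) (hU : Integrable U μ)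
    {g : ℝ × E → F}
    (hg₁m : StronglyMeasurable fun c => g (1, c)) (hg₀m : StronglyMeasurable fun c => g (0, c))
    (hg₁ : Integrable (fun ω => g (1, C ω)) μ) (hg₀ : Integrable (fun ω => g (0, C ω)) μ)
    (hexcl : μ[U | m] =ᵐ[μ] μ[U | MeasurableSpace.comap C inferInstance]) :
    μ[fun ω => g (W ω, C ω) + U ω | m] =ᵐ[μ] fun ω =>
      (μ[W | m]) ω • (g (1, C ω) + (μ[U | MeasurableSpace.comap C inferInstance]) ω)
        + (1 - (μ[W | m]) ω) •
          (g (0, C ω) + (μ[U | MeasurableSpace.comap C inferInstance]) ω) := by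
  let X (w : ℝ) (ω : Ω) : F := g (w, C ω)
  have hadd : μ[fun ω => X (W ω) ω + U ω | m] =ᵐ[μ] μ[fun ω => X (W ω) ω | m] + μ[U | m] :=
    condExp_add (integrable_apply_of_binary (X := X) hWint.aestronglyMeasurable hW hg₁ hg₀) hU m
  have hX : μ[fun ω => X (W ω) ω | m] =ᵐ[μ] μ[W | m] • X 1 + (1 - μ[W | m]) • X 0 :=
    condExp_apply_of_binary hm hWint hW hg₁ hg₀
      (hg₁m.comp_measurable hC).aestronglyMeasurable
      (hg₀m.comp_measurable hC).aestronglyMeasurable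
  filter_upwards [hadd, hX, hexcl] with ω haddω hXω hexclω
  rw [haddω, Pi.add_apply, hXω, hexclω]
  simp only [X, Pi.add_apply, Pi.smul_apply', Pi.sub_apply, Pi.one_apply]
  module

end

/-- The IV counterfactual prediction identity for a binary treatment:
under the instrument-exclusion condition `μ[U | σ(S,C)] = μ[U | σ(C)]`,
the conditional expectation of the outcome `Y = g(W, C) + U` given `σ(S,C)` equals
`f₁ · μ[W | σ(S,C)] + f₀ · (1 − μ[W | σ(S,C)])`, where
`f_w = g(w, C) + μ[U | σ(C)]` are the counterfactual prediction functions. -/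
theorem civ_counterfactual_prediction_identity
    {Ω E : Type*} [MeasurableSpace Ω] [MeasurableSpace E]
    {μ : Measure Ω} [IsProbabilityMeasure μ]
    (C : Ω → E) (S W U : Ω → ℝ)
    (hC : Measurable C) (hS : Measurable S) (hW : Measurable W) (hU : Measurable U)
    (hWbin : ∀ ω, W ω = 0 ∨ W ω = 1)
    (hUint : Integrable U μ)
    (g : ℝ × E → ℝ) (hg : Measurable g)
    (hg1 : Integrable (fun ω => g (1, C ω)) μ)
    (hg0 : Integrable (fun ω => g (0, C ω)) μ)
    (Y : Ω → ℝ) (hY : Y = fun ω => g (W ω, C ω) + U ω)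
    (hexcl :
      μ[U | MeasurableSpace.comap (fun ω => (S ω, C ω)) inferInstance]
        =ᵐ[μ] μ[U | MeasurableSpace.comap C inferInstance])
    (f₁ f₀ : Ω → ℝ)
    (hf₁ : f₁ = fun ω =>
      g (1, C ω) + (μ[U | MeasurableSpace.comap C inferInstance]) ω)
    (hf₀ : f₀ = fun ω =>
      g (0, C ω) + (μ[U | MeasurableSpace.comap C inferInstance]) ω) :
    μ[Y | MeasurableSpace.comap (fun ω => (S ω, C ω)) inferInstance]
      =ᵐ[μ] fun ω =>
        f₁ ω * (μ[W | MeasurableSpace.comap (fun ω => (S ω, C ω)) inferInstance]) ω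
          + f₀ ω * (1 - (μ[W | MeasurableSpace.comap (fun ω => (S ω, C ω)) inferInstance]) ω) := by
  have hg_section (w : ℝ) : StronglyMeasurable fun c => g (w, c) :=
    (hg.comp measurable_prodMk_left).stronglyMeasurable
  have hWae : ∀ᵐ ω ∂μ, W ω = 0 ∨ W ω = 1 := ae_of_all μ hWbin
  have hWint : Integrable W μ :=
    .of_bound hW.aestronglyMeasurable 1 (ae_norm_le_one_of_binary hWae)
  subst hY hf₁ hf₀
  simpa only [smul_eq_mul, mul_comm] using
    civ_counterfactual_prediction_identity_general (C := C) (hS.prodMk hC).comap_le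
      (measurable_snd.comp (comap_measurable fun ω => (S ω, C ω))) hWint hWae hUint
      (hg_section 1) (hg_section 0) hg1 hg0 hexcl
end

section
/- Let E be a measurable space and ν a measure on E (the law of the observed confounders C). Let π₀, π₁, h₀, h₁, h₀', h₁' : E → ℝ be measurable functions and suppose that for ν-almost every c: π₀(c) ≠ π₁(c), and for each s ∈ {0,1}, h₁(c)·π_s(c) + h₀(c)·(1 − π_s(c)) = h₁'(c)·π_s(c) + h₀'(c)·(1 − π_s(c)). Then h₁ = h₁' ν-almost everywhere and h₀ = h₀' ν-almost everywhere. -/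
open MeasureTheory

/-! At a fixed `c`, the mixture `h₁ c * t + h₀ c * (1 - t)` is an affine function of the treatment
probability `t`, with values `h₀ c` at `t = 0` and `h₁ c` at `t = 1`. A relevant instrument reveals
it at two distinct points, and these determine an affine function. -/

section

variable {R V P : Type*} [Ring R] [IsCancelMulZero R] [AddCommGroup V] [Module R V]
  [Module.IsTorsionFree R V]

theorem linearMap_ext_of_apply_eq {f g : R →ₗ[R] V} {r : R} (hr : r ≠ 0) (h : f r = g r) :
    f = g := by
  refine LinearMap.ext_ring (smul_right_injective V hr ?_)
  simpa only [← map_smul, smul_eq_mul, mul_one] using h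

theorem affineMap_ext_of_apply_eq_of_ne [AddTorsor V P] {f g : R →ᵃ[R] P} {r s : R}
    (hrs : r ≠ s) (hr : f r = g r) (hs : f s = g s) : f = g := by
  have hlinear : f.linear = g.linear := by
    apply linearMap_ext_of_apply_eq (sub_ne_zero.mpr hrs)
    simp only [← vsub_eq_sub, AffineMap.linearMap_vsub, hr, hs]
  exact AffineMap.ext_linear hlinear hr

theorem endpoints_eq_of_lineMap_eq_of_ne [AddTorsor V P] {a b a' b' : P} {r s : R} (hrs : r ≠ s)
    (hr : AffineMap.lineMap a b r = AffineMap.lineMap a' b' r)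
    (hs : AffineMap.lineMap a b s = AffineMap.lineMap a' b' s) :
    a = a' ∧ b = b' := by
  have hline : (AffineMap.lineMap a b : R →ᵃ[R] P) = AffineMap.lineMap a' b' :=
    affineMap_ext_of_apply_eq_of_ne hrs hr hs
  exact ⟨by simpa using DFunLike.congr_fun hline 0, by simpa using DFunLike.congr_fun hline 1⟩

theorem counterfactual_functions_identifiable_general {E : Type*} {l : Filter E}
    {π₀ π₁ : E → R} {h₁ h₀ h₁' h₀' : E → V}
    (hne : ∀ᶠ c in l, π₀ c ≠ π₁ c)
    (heq0 : ∀ᶠ c in l,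
      π₀ c • h₁ c + (1 - π₀ c) • h₀ c = π₀ c • h₁' c + (1 - π₀ c) • h₀' c)
    (heq1 : ∀ᶠ c in l,
      π₁ c • h₁ c + (1 - π₁ c) • h₀ c = π₁ c • h₁' c + (1 - π₁ c) • h₀' c) :
    h₁ =ᶠ[l] h₁' ∧ h₀ =ᶠ[l] h₀' := by
  refine Filter.eventually_and.mp ?_
  filter_upwards [hne, heq0, heq1] with c hc h_mix₀ h_mix₁
  refine (endpoints_eq_of_lineMap_eq_of_ne hc ?_ ?_).symm
  · simpa only [AffineMap.lineMap_apply_module, add_comm] using h_mix₀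
  · simpa only [AffineMap.lineMap_apply_module, add_comm] using h_mix₁

end

/-- Identifiability of the counterfactual prediction functions: if the conditional treatment
probabilities `π₀, π₁` under the two instrument values differ ν-a.e. (instrument relevance),
then the pair `(h₁, h₀)` solving the inverse problem is unique ν-a.e. -/
theorem counterfactual_functions_identifiable
    {E : Type*} [MeasurableSpace E] (ν : Measure E)
    (π₀ π₁ h₁ h₀ h₁' h₀' : E → ℝ)
    (hπ₀ : Measurable π₀) (hπ₁ : Measurable π₁)
    (hh₁ : Measurable h₁) (hh₀ : Measurable h₀)
    (hh₁' : Measurable h₁') (hh₀' : Measurable h₀')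
    (hne : ∀ᵐ c ∂ν, π₀ c ≠ π₁ c)
    (heq0 : ∀ᵐ c ∂ν,
      h₁ c * π₀ c + h₀ c * (1 - π₀ c) = h₁' c * π₀ c + h₀' c * (1 - π₀ c))
    (heq1 : ∀ᵐ c ∂ν,
      h₁ c * π₁ c + h₀ c * (1 - π₁ c) = h₁' c * π₁ c + h₀' c * (1 - π₁ c)) :
    h₁ =ᵐ[ν] h₁' ∧ h₀ =ᵐ[ν] h₀' := by
  exact counterfactual_functions_identifiable_general hne
    (by simpa only [smul_eq_mul, mul_comm] using heq0)
    (by simpa only [smul_eq_mul, mul_comm] using heq1)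
end
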